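/- Let 0 < α < 1 and let A be a real s×s matrix all of whose (complex) eigenvalues λ satisfy λ ≠ 0 and |arg λ| > απ/2. Then sup_{t≥0} t^{1-α} ∫₀^t (t-τ)^{α-1} ‖E_{α,α}((t-τ)^α A)‖ τ^{α-1} dτ < ∞, where ‖·‖ denotes the operator (matrix) norm. -/

import Mathlib

open Filter Topology MeasureTheory

attribute [local instance] Matrix.linftyOpNormedAddCommGroup Matrix.linftyOpNormedRing

/-- The matrix Mittag-Leffler function `E_{α,β}(B) = ∑ Bᵏ / Γ(αk + β)`. -/
noncomputable def ML {s : ℕ} (α β : ℝ) (B : Matrix (Fin s) (Fin s) ℝ) :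
    Matrix (Fin s) (Fin s) ℝ :=
  ∑' k : ℕ, (Real.Gamma (α * k + β))⁻¹ • B ^ k

/-!
The function `t ↦ t ^ (α - 1) • E_{α,α}(t ^ α • a)` has Laplace transform `(s ^ α - a)⁻¹`. As `s`
runs over the right half plane, `s ^ α` stays in the sector `|arg z| ≤ απ/2`, which the spectral
condition places in the resolvent set of `a`; there both `(z - a)⁻¹` and `z (z - a)⁻¹` are bounded.
Differentiating the transform twice, which multiplies the function by `t ^ 2`, gives a transform
bounded by multiples of `|s| ^ (-(2 - α))` and of `|s| ^ (-(2 + α))`, so it can be inverted by an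
absolutely convergent integral over `Re s = 1 / t`. The outcome is
`‖E_{α,α}(t ^ α • a)‖ ≤ K min(1, t ^ (-2α))`. The kernel `u ^ (α - 1) ‖E_{α,α}(u ^ α • a)‖` is then
integrable on `(0, ∞)` and at most `K / u`, and splitting the convolution at `t / 2` bounds it by a
multiple of `t ^ (α - 1)`. All of this takes place in a complex Banach algebra; a real matrix enters
through its complexification.
-/

section

open Complex

section VerticalLine

variable {E : Type*} [NormedAddCommGroup E]

lemma norm_add_mul_I_rpow_neg {c : ℝ} (hc : 0 < c) (r w : ℝ) :
    ‖(c : ℂ) + w * I‖ ^ (-r) = c ^ (-r) * (1 + (c⁻¹ * w) ^ 2) ^ (-r / 2) := by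
  have hsq : c ^ 2 + w ^ 2 = c ^ 2 * (1 + (c⁻¹ * w) ^ 2) := by field_simp
  rw [norm_add_mul_I, Real.sqrt_eq_rpow, ← Real.rpow_mul (by positivity), hsq,
    Real.mul_rpow (by positivity) (by positivity), ← Real.rpow_natCast_mul hc.le]
  congr 2 <;> push_cast <;> ring

lemma integrable_one_add_sq_rpow_neg {r : ℝ} (hr : 1 < r) :
    Integrable fun w : ℝ => (1 + w ^ 2) ^ (-r / 2) := by
  simpa using integrable_rpow_neg_one_add_norm_sq (E := ℝ) (μ := volume) (r := r) (by simpa)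

lemma integrable_norm_add_mul_I_rpow_neg {c r : ℝ} (hc : 0 < c) (hr : 1 < r) :
    Integrable fun w : ℝ => ‖(c : ℂ) + w * I‖ ^ (-r) := by
  simp only [norm_add_mul_I_rpow_neg hc]
  exact ((integrable_one_add_sq_rpow_neg hr).comp_mul_left' (inv_ne_zero hc.ne')).const_mul _

lemma integral_norm_add_mul_I_rpow_neg {c : ℝ} (hc : 0 < c) (r : ℝ) :
    ∫ w : ℝ, ‖(c : ℂ) + w * I‖ ^ (-r) = c ^ (1 - r) * ∫ w : ℝ, (1 + w ^ 2) ^ (-r / 2) := by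
  simp only [norm_add_mul_I_rpow_neg hc]
  rw [integral_const_mul, Measure.integral_comp_mul_left (fun w : ℝ => (1 + w ^ 2) ^ (-r / 2)) c⁻¹,
    inv_inv, abs_of_pos hc, smul_eq_mul, ← mul_assoc, ← Real.rpow_add_one hc.ne', neg_add_eq_sub]

lemma continuous_vertical_of_continuousOn {G : ℂ → E} (hG : ContinuousOn G {s | 0 < s.re})
    {c : ℝ} (hc : 0 < c) : Continuous fun w : ℝ => G (c + w * I) :=
  hG.comp_continuous (by fun_prop) fun w => by simpa using hc

lemma verticalIntegrable_of_norm_le {G : ℂ → E} {c r M : ℝ} (hc : 0 < c) (hr : 1 < r)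
    (hG : ContinuousOn G {s | 0 < s.re}) (hM : ∀ s : ℂ, s.re = c → ‖G s‖ ≤ M * ‖s‖ ^ (-r)) :
    VerticalIntegrable G c :=
  ((integrable_norm_add_mul_I_rpow_neg hc hr).const_mul M).mono'
    (continuous_vertical_of_continuousOn hG hc).aestronglyMeasurable
    (.of_forall fun w => hM _ (by simp))

end VerticalLine

section ContourShift

variable {E : Type*} [NormedAddCommGroup E] [NormedSpace ℂ E] {G : ℂ → E} {c d r M : ℝ}

lemma tendsto_integral_horizontal_of_norm_le (hcd : c ≤ d) (hr : 0 < r)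
    (hM : ∀ s : ℂ, c ≤ s.re → s.re ≤ d → ‖G s‖ ≤ M * ‖s‖ ^ (-r)) {ι : Type*} {l : Filter ι}
    {y : ι → ℝ} (hy : Tendsto (fun i => |y i|) l atTop) :
    Tendsto (fun i => ∫ x in c..d, G (x + y i * I)) l (𝓝 0) := by
  have hbound : Tendsto (fun i => |M| * |y i| ^ (-r) * |d - c|) l (𝓝 0) := by
    simpa using (((tendsto_rpow_neg_atTop hr).comp hy).const_mul |M|).mul_const |d - c|
  refine squeeze_zero_norm' ?_ hbound
  filter_upwards [hy.eventually_gt_atTop 0] with i hi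
  refine intervalIntegral.norm_integral_le_of_norm_le_const fun x hx => ?_
  rw [Set.uIoc_of_le hcd] at hx
  have him : |y i| ≤ ‖(x : ℂ) + y i * I‖ := by simpa using abs_im_le_norm ((x : ℂ) + y i * I)
  calc ‖G (x + y i * I)‖ ≤ M * ‖(x : ℂ) + y i * I‖ ^ (-r) :=
        hM _ (by simpa using hx.1.le) (by simpa using hx.2)
    _ ≤ |M| * |y i| ^ (-r) := by
        gcongr ?_ * ?_
        · exact le_abs_self M
        · exact Real.rpow_le_rpow_of_nonpos hi him (by linarith)

lemma integral_vertical_eq_of_norm_le [CompleteSpace E] (hc : 0 < c) (hcd : c ≤ d) (hr : 1 < r)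
    (hG : DifferentiableOn ℂ G {s | 0 < s.re})
    (hM : ∀ s : ℂ, c ≤ s.re → s.re ≤ d → ‖G s‖ ≤ M * ‖s‖ ^ (-r)) :
    ∫ w : ℝ, G (c + w * I) = ∫ w : ℝ, G (d + w * I) := by
  have hvert (x : ℝ) (hcx : c ≤ x) (hxd : x ≤ d) :
      Tendsto (fun T : ℝ => ∫ w in -T..T, G (x + w * I)) atTop (𝓝 (∫ w : ℝ, G (x + w * I))) :=
    intervalIntegral_tendsto_integral
      (verticalIntegrable_of_norm_le (hc.trans_le hcx) hr hG.continuousOn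
        fun s hs => hM s (hcx.trans_eq hs.symm) (hs.trans_le hxd))
      tendsto_neg_atTop_atBot tendsto_id
  have hrect (T : ℝ) :
      I • (∫ w in -T..T, G (d + w * I)) - I • (∫ w in -T..T, G (c + w * I)) =
        (∫ x in c..d, G (x + T * I)) - ∫ x in c..d, G (x + (-T : ℝ) * I) := by
    have hboundary := integral_boundary_rect_eq_zero_of_differentiableOn G ⟨c, -T⟩ ⟨d, T⟩
      (hG.mono fun z hz => hc.trans_le (by simpa [hcd] using hz.1.1))
    rw [← sub_eq_zero, ← hboundary]
    abel
  have hhor := (tendsto_integral_horizontal_of_norm_le hcd (by linarith) hM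
    tendsto_abs_atTop_atTop).sub (tendsto_integral_horizontal_of_norm_le hcd (by linarith) hM
      (y := fun T => -T) (by simpa using tendsto_abs_atTop_atTop))
  have hdiff := ((hvert d hcd le_rfl).const_smul I).sub ((hvert c le_rfl hcd).const_smul I)
  have hzero := tendsto_nhds_unique (hdiff.congr hrect) hhor
  rw [sub_zero, ← smul_sub, smul_eq_zero_iff_right I_ne_zero, sub_eq_zero] at hzero
  exact hzero.symm

end ContourShift

/-- The Bromwich integral `(2πi)⁻¹ ∫ e^{st} G(s) ds` along the line `Re s = c`, parametrised by
`s = c + iw`. It recovers a function from its Laplace transform `G`. -/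
noncomputable def inverseLaplace {E : Type*} [NormedAddCommGroup E] [NormedSpace ℂ E]
    (G : ℂ → E) (c t : ℝ) : E :=
  (2 * Real.pi)⁻¹ • ∫ w : ℝ, exp ((c + w * I) * t) • G (c + w * I)

section InverseLaplace

variable {E : Type*} [NormedAddCommGroup E] [NormedSpace ℂ E] {G : ℂ → E} {r M : ℝ}

lemma norm_exp_vertical (c w t : ℝ) : ‖exp ((c + w * I) * t)‖ = Real.exp (c * t) := by
  simp [norm_exp]

lemma inverseLaplace_eq_of_norm_le [CompleteSpace E] (hr : 1 < r)
    (hG : DifferentiableOn ℂ G {s | 0 < s.re})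
    (hM : ∀ s : ℂ, 0 < s.re → ‖G s‖ ≤ M * ‖s‖ ^ (-r))
    {c d : ℝ} (hc : 0 < c) (hd : 0 < d) {t : ℝ} (ht : 0 ≤ t) :
    inverseLaplace G c t = inverseLaplace G d t := by
  wlog hcd : c ≤ d generalizing c d
  · exact (this hd hc (le_of_not_ge hcd)).symm
  rw [inverseLaplace, inverseLaplace]
  congr 1
  refine integral_vertical_eq_of_norm_le (G := fun s => exp (s * t) • G s)
    (M := Real.exp (d * t) * M) hc hcd hr ?_ fun s hcs hsd => ?_
  · exact DifferentiableOn.fun_smul (by fun_prop) hG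
  · have hexp : ‖exp (s * t)‖ ≤ Real.exp (d * t) := by
      rw [norm_exp, re_mul_ofReal]
      gcongr
    rw [norm_smul, mul_assoc]
    exact mul_le_mul hexp (hM s (hc.trans_le hcs)) (norm_nonneg _) (Real.exp_pos _).le

-- The line of integration is moved to `Re s = 1 / t`, where `|e^{st}| = e`.
lemma norm_inverseLaplace_le [CompleteSpace E] (hr : 1 < r)
    (hG : DifferentiableOn ℂ G {s | 0 < s.re})
    (hM : ∀ s : ℂ, 0 < s.re → ‖G s‖ ≤ M * ‖s‖ ^ (-r))
    {c t : ℝ} (hc : 0 < c) (ht : 0 < t) :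
    ‖inverseLaplace G c t‖ ≤
      (2 * Real.pi)⁻¹ * (Real.exp 1 * M * ∫ w : ℝ, (1 + w ^ 2) ^ (-r / 2)) * t ^ (r - 1) := by
  have hinv : 0 < t⁻¹ := inv_pos.2 ht
  have hline (w : ℝ) : ‖exp (((t⁻¹ : ℝ) + w * I) * t) • G ((t⁻¹ : ℝ) + w * I)‖ ≤
      Real.exp 1 * M * ‖((t⁻¹ : ℝ) : ℂ) + w * I‖ ^ (-r) := by
    rw [norm_smul, norm_exp_vertical, inv_mul_cancel₀ ht.ne', mul_assoc]
    gcongr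
    exact hM _ (by simpa using ht)
  have hpow : t⁻¹ ^ (1 - r) = t ^ (r - 1) := by
    rw [Real.inv_rpow ht.le, ← Real.rpow_neg ht.le, neg_sub]
  rw [inverseLaplace_eq_of_norm_le hr hG hM hc hinv ht.le, inverseLaplace, norm_smul,
    Real.norm_of_nonneg (by positivity), mul_assoc]
  gcongr
  calc ‖∫ w : ℝ, exp (((t⁻¹ : ℝ) + w * I) * t) • G ((t⁻¹ : ℝ) + w * I)‖
      ≤ ∫ w : ℝ, Real.exp 1 * M * ‖((t⁻¹ : ℝ) : ℂ) + w * I‖ ^ (-r) :=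
        norm_integral_le_of_norm_le ((integrable_norm_add_mul_I_rpow_neg hinv hr).const_mul _)
          (.of_forall hline)
    _ = Real.exp 1 * M * (∫ w : ℝ, (1 + w ^ 2) ^ (-r / 2)) * t ^ (r - 1) := by
        rw [integral_const_mul, integral_norm_add_mul_I_rpow_neg hinv, hpow]
        ring

lemma inverseLaplace_smul_const [CompleteSpace E] (g : ℂ → ℂ) (x : E) (c t : ℝ) :
    inverseLaplace (fun s => g s • x) c t = inverseLaplace g c t • x := by
  simp only [inverseLaplace, smul_smul]
  rw [integral_smul_const, smul_assoc]
  simp only [smul_eq_mul]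

lemma inverseLaplace_const_mul (z : ℂ) (g : ℂ → ℂ) (c t : ℝ) :
    inverseLaplace (fun s => z * g s) c t = z * inverseLaplace g c t := by
  simp only [inverseLaplace, smul_eq_mul, mul_left_comm _ z]
  rw [integral_const_mul, mul_smul_comm]

lemma hasSum_inverseLaplace [CompleteSpace E] {F : ℕ → ℂ → E} {B : ℕ → ℝ} {c : ℝ} (hc : 0 < c)
    (hr : 1 < r) (hF : ∀ k, ContinuousOn (F k) {s | 0 < s.re}) (hB : Summable B)
    (hFB : ∀ k (s : ℂ), s.re = c → ‖F k s‖ ≤ B k * ‖s‖ ^ (-r))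
    (hG : ∀ s : ℂ, s.re = c → HasSum (F · s) (G s)) (t : ℝ) :
    HasSum (fun k => inverseLaplace (F k) c t) (inverseLaplace G c t) := by
  have hline := integrable_norm_add_mul_I_rpow_neg hc hr
  have hint (k : ℕ) : Integrable fun w : ℝ => exp ((c + w * I) * t) • F k (c + w * I) :=
    (verticalIntegrable_of_norm_le hc hr (hF k) (hFB k)).bdd_smul (Real.exp (c * t))
      (by fun_prop) (.of_forall fun w => (norm_exp_vertical c w t).le)
  have hbound (k : ℕ) : ∫ w : ℝ, ‖exp ((c + w * I) * t) • F k (c + w * I)‖ ≤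
      B k * (Real.exp (c * t) * ∫ w : ℝ, ‖(c : ℂ) + w * I‖ ^ (-r)) := by
    rw [← integral_const_mul, ← integral_const_mul]
    refine integral_mono (hint k).norm ((hline.const_mul _).const_mul _) fun w => ?_
    simp only [norm_smul, norm_exp_vertical]
    rw [mul_left_comm]
    gcongr
    exact hFB k _ (by simp)
  have hsum := hasSum_integral_of_summable_integral_norm hint
    (.of_nonneg_of_le (fun k => by positivity) hbound (hB.mul_right _))
  have htsum (w : ℝ) : ∑' k, exp ((c + w * I) * t) • F k (c + w * I) =
      exp ((c + w * I) * t) • G (c + w * I) := ((hG _ (by simp)).const_smul _).tsum_eq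
  simp only [htsum] at hsum
  exact hsum.const_smul _

end InverseLaplace

section LaplaceInversion

open FourierTransform

lemma inverseLaplace_eq_of_laplace_eq {E : Type*} [NormedAddCommGroup E] [NormedSpace ℂ E]
    [CompleteSpace E] {f : ℝ → E} {F : ℂ → E} {c t : ℝ}
    (hf : Integrable fun x : ℝ => exp (-(c * x)) • f x)
    (hF : ∀ s : ℂ, s.re = c → ∫ x : ℝ, exp (-(s * x)) • f x = F s)
    (hFc : VerticalIntegrable F c) (hft : ContinuousAt f t) :
    inverseLaplace F c t = f t := by
  have hfourier : 𝓕 (fun x : ℝ => exp (-(c * x)) • f x) =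
      fun v : ℝ => F (c + (2 * Real.pi * v : ℝ) * I) := by
    ext v
    rw [← hF _ (by simp), Real.fourier_real_eq_integral_exp_smul]
    congr with x
    rw [smul_smul, ← exp_add]
    congr 2
    push_cast
    ring
  have hinv := hf.fourierInv_fourier_eq (v := t)
    (hfourier ▸ Integrable.comp_mul_left' hFc (R := 2 * Real.pi) (by positivity))
    (ContinuousAt.smul (by fun_prop) hft)
  have hscale := Measure.integral_comp_mul_left
    (fun w : ℝ => exp ((c + w * I) * t) • F (c + w * I)) (2 * Real.pi)
  rw [abs_of_pos (by positivity)] at hscale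
  rw [inverseLaplace, ← hscale]
  calc _ = exp (c * t) • 𝓕⁻ (𝓕 fun x : ℝ => exp (-(c * x)) • f x) t := by
        rw [hfourier, Real.fourierInv_eq', ← integral_smul]
        congr with v
        rw [smul_smul, ← exp_add]
        congr 2
        simp only [RCLike.inner_apply, conj_trivial]
        push_cast
        ring
    _ = f t := by
        rw [hinv, smul_smul, ← exp_add]
        simp

lemma eqOn_re_pos_of_eqOn_ofReal {F G : ℂ → ℂ} (hF : DifferentiableOn ℂ F {s | 0 < s.re})
    (hG : DifferentiableOn ℂ G {s | 0 < s.re}) (h : ∀ x : ℝ, 0 < x → F x = G x) :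
    Set.EqOn F G {s | 0 < s.re} := by
  have hopen : IsOpen {s : ℂ | 0 < s.re} := isOpen_lt continuous_const continuous_re
  have hreal : Tendsto ((↑) : ℝ → ℂ) (𝓝[≠] 1) (𝓝[≠] 1) :=
    continuous_ofReal.continuousWithinAt.tendsto_nhdsWithin fun x hx => by simpa using hx
  refine (hF.analyticOnNhd hopen).eqOn_of_preconnected_of_frequently_eq (hG.analyticOnNhd hopen)
    (convex_halfSpace_re_gt 0).isPreconnected (z₀ := 1) (by simp) ?_
  refine hreal.frequently (Eventually.frequently ?_)
  filter_upwards [nhdsWithin_le_nhds (Ioi_mem_nhds one_pos)] with x hx using h x hx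

lemma integrableOn_rpow_mul_exp_neg_mul {q r : ℝ} (hq : 0 < q) (hr : 0 < r) :
    IntegrableOn (fun x : ℝ => x ^ (q - 1) * Real.exp (-(r * x))) (Set.Ioi 0) := by
  simpa using integrableOn_rpow_mul_exp_neg_mul_rpow (p := 1) (s := q - 1) (by linarith)
    one_pos hr

lemma differentiableOn_integral_rpow_mul_exp_neg_mul {q : ℝ} (hq : 0 < q) :
    DifferentiableOn ℂ (fun s : ℂ => ∫ x in Set.Ioi (0 : ℝ), ((x ^ (q - 1) : ℝ) : ℂ) *
      exp (-(s * x))) {s | 0 < s.re} := by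
  -- The integral is the complex moment generating function of `-x` for the density `x ^ (q - 1)`.
  let μ : Measure ℝ :=
    (volume.restrict (Set.Ioi 0)).withDensity fun x => ENNReal.ofReal (x ^ (q - 1))
  have hmeas : Measurable fun x : ℝ => ENNReal.ofReal (x ^ (q - 1)) := by fun_prop
  have htoReal : ∀ᵐ x ∂volume.restrict (Set.Ioi (0 : ℝ)),
      (ENNReal.ofReal (x ^ (q - 1))).toReal = x ^ (q - 1) := by
    filter_upwards [ae_restrict_mem measurableSet_Ioi] with x hx
    exact ENNReal.toReal_ofReal (Real.rpow_nonneg (le_of_lt hx) _)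
  have hmgf (s : ℂ) : ProbabilityTheory.complexMGF (fun x : ℝ => -x) μ s =
      ∫ x in Set.Ioi (0 : ℝ), ((x ^ (q - 1) : ℝ) : ℂ) * exp (-(s * x)) := by
    rw [ProbabilityTheory.complexMGF, integral_withDensity_eq_integral_toReal_smul hmeas (by simp)]
    refine integral_congr_ae ?_
    filter_upwards [htoReal] with x hx
    simp [hx]
  have hexp : Set.Ioi 0 ⊆ ProbabilityTheory.integrableExpSet (fun x : ℝ => -x) μ := by
    intro r hr
    refine (integrable_withDensity_iff_integrable_smul' hmeas (by simp)).2 ?_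
    refine (integrableOn_rpow_mul_exp_neg_mul hq hr).congr ?_
    filter_upwards [htoReal] with x hx
    simp [hx]
  simp only [← hmgf]
  exact ProbabilityTheory.differentiableOn_complexMGF.mono
    fun s hs => interior_maximal hexp isOpen_Ioi hs

lemma integral_rpow_mul_exp_neg_mul_Ioi_of_re_pos {q : ℝ} (hq : 0 < q) {s : ℂ} (hs : 0 < s.re) :
    ∫ x in Set.Ioi (0 : ℝ), ((x ^ (q - 1) : ℝ) : ℂ) * exp (-(s * x)) =
      Real.Gamma q * s ^ (-q : ℂ) := by
  refine eqOn_re_pos_of_eqOn_ofReal (G := fun s => Real.Gamma q * s ^ (-q : ℂ))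
    (differentiableOn_integral_rpow_mul_exp_neg_mul hq)
    (fun z hz => (differentiableAt_id.cpow_const (.inl hz)).const_mul _
      |>.differentiableWithinAt) (fun r hr => ?_) hs
  have hreal : ∫ x in Set.Ioi (0 : ℝ), x ^ (q - 1) * Real.exp (-(r * x)) =
      Real.Gamma q * r ^ (-q) := by
    rw [Real.integral_rpow_mul_exp_neg_mul_Ioi hq hr, one_div, Real.inv_rpow hr.le,
      Real.rpow_neg hr.le, mul_comm]
  rw [← ofReal_neg, ← ofReal_cpow hr.le, ← ofReal_mul, ← hreal, ← integral_complex_ofReal]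
  simp

lemma continuousOn_cpow_const_re_pos (z : ℂ) : ContinuousOn (fun s : ℂ => s ^ z) {s | 0 < s.re} :=
  fun _ hs => (continuousAt_id.cpow continuousAt_const (.inl hs)).continuousWithinAt

lemma norm_cpow_neg_ofReal (s : ℂ) (q : ℝ) : ‖s ^ (-q : ℂ)‖ = ‖s‖ ^ (-q) := by
  rw [← ofReal_neg, norm_cpow_real]

lemma inverseLaplace_cpow_neg {q : ℝ} (hq : 1 < q) {c t : ℝ} (hc : 0 < c) (ht : 0 < t) :
    inverseLaplace (fun s => s ^ (-q : ℂ)) c t = (t ^ (q - 1) / Real.Gamma q : ℝ) := by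
  have hq₀ : 0 < q := one_pos.trans hq
  have hΓ : (Real.Gamma q : ℂ) ≠ 0 := ofReal_ne_zero.2 (Real.Gamma_pos_of_pos hq₀).ne'
  let f : ℝ → ℂ := (Set.Ioi 0).indicator fun x => ((x ^ (q - 1) / Real.Gamma q : ℝ) : ℂ)
  have hf (s : ℂ) : (fun x : ℝ => exp (-(s * x)) • f x) = (Set.Ioi 0).indicator fun x : ℝ =>
      (((x ^ (q - 1) : ℝ) : ℂ) * exp (-(s * x))) / Real.Gamma q := by
    ext x
    by_cases hx : x ∈ Set.Ioi 0
    · simp only [f, Set.indicator_of_mem hx, smul_eq_mul]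
      push_cast
      ring
    · simp only [f, Set.indicator_of_notMem hx, smul_zero]
  have hft : f =ᶠ[𝓝 t] fun x => ((x ^ (q - 1) / Real.Gamma q : ℝ) : ℂ) := by
    filter_upwards [Ioi_mem_nhds ht] with x hx using Set.indicator_of_mem hx _
  rw [← hft.eq_of_nhds]
  refine inverseLaplace_eq_of_laplace_eq ?_ (fun s hs => ?_) ?_ ?_
  · rw [hf, integrable_indicator_iff measurableSet_Ioi]
    refine Integrable.div_const ?_ _
    exact_mod_cast (integrableOn_rpow_mul_exp_neg_mul hq₀ hc).ofReal (𝕜 := ℂ)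
  · rw [hf, integral_indicator measurableSet_Ioi, integral_div,
      integral_rpow_mul_exp_neg_mul_Ioi_of_re_pos hq₀ (hs ▸ hc), mul_div_cancel_left₀ _ hΓ]
  · exact verticalIntegrable_of_norm_le (M := 1) hc hq (continuousOn_cpow_const_re_pos _)
      fun s _ => by rw [norm_cpow_neg_ofReal, one_mul]
  · refine ContinuousAt.congr ?_ hft.symm
    have hpow := Real.continuousAt_rpow_const t (q - 1) (.inl ht.ne')
    fun_prop

end LaplaceInversion

section Sector

lemma abs_arg_le_iff_norm_mul_cos_le {θ : ℝ} (h₀ : 0 ≤ θ) (hπ : θ ≤ Real.pi) {z : ℂ} :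
    |arg z| ≤ θ ↔ ‖z‖ * Real.cos θ ≤ z.re := by
  rcases eq_or_ne z 0 with rfl | hz
  · simpa
  rw [← norm_mul_cos_arg, mul_le_mul_iff_right₀ (norm_pos_iff.2 hz), ← Real.cos_abs (arg z),
    Real.strictAntiOn_cos.le_iff_ge ⟨h₀, hπ⟩ ⟨abs_nonneg _, abs_arg_le_pi z⟩]

lemma isClosed_abs_arg_le {θ : ℝ} (h₀ : 0 ≤ θ) (hπ : θ ≤ Real.pi) :
    IsClosed {z : ℂ | |arg z| ≤ θ} := by
  simp only [abs_arg_le_iff_norm_mul_cos_le h₀ hπ]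
  exact isClosed_le (by fun_prop) continuous_re

lemma arg_cpow_ofReal {x : ℝ} {s : ℂ} (hx : |x * arg s| < Real.pi) :
    arg (s ^ (x : ℂ)) = x * arg s := by
  rcases eq_or_ne s 0 with rfl | hs
  · rcases eq_or_ne x 0 with rfl | hx₀ <;> simp [*]
  have him : (log s * x).im = x * arg s := by rw [im_mul_ofReal, log_im, mul_comm]
  rw [cpow_def_of_ne_zero hs, arg_exp, him,
    (toIocMod_eq_self Real.two_pi_pos).2 ⟨(abs_lt.1 hx).1, by linarith [(abs_lt.1 hx).2]⟩]

lemma abs_arg_cpow_ofReal_le_of_re_nonneg {α : ℝ} (hα₀ : 0 ≤ α) (hα₂ : α < 2) {s : ℂ}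
    (hs : 0 ≤ s.re) : |arg (s ^ (α : ℂ))| ≤ α * Real.pi / 2 := by
  have hprod : |α * arg s| ≤ α * Real.pi / 2 := by
    rw [abs_mul, abs_of_nonneg hα₀, mul_div_assoc]
    gcongr
    exact abs_arg_le_pi_div_two_iff.2 hs
  rwa [arg_cpow_ofReal (hprod.trans_lt (by nlinarith [Real.pi_pos]))]

end Sector

section Resolvent

variable {𝔸 : Type*} [NormedRing 𝔸] [NormedAlgebra ℂ 𝔸] {a : 𝔸}

lemma smul_resolvent_eq_one_add {w : ℂ} (hw : w ∈ resolventSet ℂ a) :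
    w • resolvent a w = 1 + a * resolvent a w := by
  have hinv : (algebraMap ℂ 𝔸 w - a) * resolvent a w = 1 := Ring.mul_inverse_cancel _ hw
  rw [← hinv, sub_mul, ← Algebra.smul_def, sub_add_cancel]

lemma exists_norm_resolvent_le_of_isClosed [CompleteSpace 𝔸] {S : Set ℂ} (hS : IsClosed S)
    (hSa : S ⊆ resolventSet ℂ a) : ∃ C, ∀ w ∈ S, ‖resolvent a w‖ ≤ C := by
  have hlarge : ∀ᶠ w in cocompact ℂ, ‖resolvent a w‖ ≤ 1 := by
    rw [← Metric.cobounded_eq_cocompact]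
    simpa using (spectrum.resolvent_tendsto_cobounded a).norm.eventually_le_const
      (norm_zero.trans_lt one_pos)
  obtain ⟨K, hK, hKc⟩ := mem_cocompact.1 hlarge
  have hcont : ContinuousOn (resolvent a) (K ∩ S) := fun w hw =>
    (spectrum.hasDerivAt_resolvent_const_left (hSa hw.2)).continuousAt.continuousWithinAt
  obtain ⟨C, hC⟩ := (hK.inter_right hS).exists_bound_of_continuousOn hcont
  refine ⟨max C 1, fun w hw => ?_⟩
  by_cases hwK : w ∈ K
  · exact (hC w ⟨hwK, hw⟩).trans (le_max_left _ _)
  · exact (show ‖resolvent a w‖ ≤ 1 from hKc hwK).trans (le_max_right _ _)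

lemma exists_norm_mul_norm_resolvent_le_of_isClosed [CompleteSpace 𝔸] {S : Set ℂ}
    (hS : IsClosed S) (hSa : S ⊆ resolventSet ℂ a) :
    ∃ D, ∀ w ∈ S, ‖w‖ * ‖resolvent a w‖ ≤ D := by
  obtain ⟨C, hC⟩ := exists_norm_resolvent_le_of_isClosed hS hSa
  refine ⟨‖(1 : 𝔸)‖ + ‖a‖ * C, fun w hw => ?_⟩
  calc ‖w‖ * ‖resolvent a w‖ = ‖1 + a * resolvent a w‖ := by
        rw [← norm_smul, smul_resolvent_eq_one_add (hSa hw)]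
    _ ≤ ‖(1 : 𝔸)‖ + ‖a‖ * C := by
        refine (norm_add_le _ _).trans ?_
        gcongr
        exact (norm_mul_le _ _).trans (by gcongr; exact hC w hw)

end Resolvent

/-- The Mittag-Leffler function `E_{α,β}(a) = ∑ aᵏ / Γ(αk + β)` of an element of a topological
algebra, through which the real matrix function `ML` is compared with its complexification. -/
noncomputable def mittagLeffler {𝔸 : Type*} [Ring 𝔸] [Algebra ℝ 𝔸] [TopologicalSpace 𝔸]
    (α β : ℝ) (a : 𝔸) : 𝔸 :=
  ∑' k : ℕ, (Real.Gamma (α * k + β))⁻¹ • a ^ k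

/-- The second derivative of `s ↦ resolvent a (s ^ α)`, written out. It is the Laplace transform of
`t ↦ t ^ (α + 1) • E_{α,α}(t ^ α • a)`; the two derivatives supply the decay in `s` that makes the
Bromwich integral absolutely convergent. -/
noncomputable def mittagLefflerTransform {𝔸 : Type*} [NormedRing 𝔸] [NormedAlgebra ℂ 𝔸]
    (α : ℝ) (a : 𝔸) (s : ℂ) : 𝔸 :=
  (s ^ 2)⁻¹ • ((2 * (α : ℂ) ^ 2) • ((s ^ (α : ℂ)) ^ 2 • resolvent a (s ^ (α : ℂ)) ^ 3)
    + ((α : ℂ) * (1 - α)) • (s ^ (α : ℂ) • resolvent a (s ^ (α : ℂ)) ^ 2))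

/-- The `k`-th term of the expansion of `mittagLefflerTransform α a` at infinity: the second
derivative of `s ^ (-(αk + α)) • a ^ k`. -/
noncomputable def mittagLefflerTransformTerm {𝔸 : Type*} [NormedRing 𝔸] [NormedAlgebra ℂ 𝔸]
    (α : ℝ) (a : 𝔸) (k : ℕ) (s : ℂ) : 𝔸 :=
  ((((α * k + α) * (α * k + α + 1) : ℝ) : ℂ) * s ^ (-(α * k + α + 2 : ℝ) : ℂ)) • a ^ k

section TransformSeries

lemma norm_pow_le_norm_one_mul {R : Type*} [SeminormedRing R] (a : R) :
    ∀ k : ℕ, ‖a ^ k‖ ≤ ‖(1 : R)‖ * ‖a‖ ^ k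
  | 0 => by simp
  | k + 1 => by
    rw [pow_succ, pow_succ, ← mul_assoc]
    exact (norm_mul_le _ _).trans (by gcongr; exact norm_pow_le_norm_one_mul a k)

lemma cpow_neg_mul_add_add_two (α : ℝ) {s : ℂ} (hs : s ≠ 0) (k : ℕ) :
    s ^ (-(α * k + α + 2 : ℝ) : ℂ) = (s ^ 2)⁻¹ * ((s ^ (α : ℂ))⁻¹ * (s ^ (α : ℂ))⁻¹ ^ k) := by
  rw [cpow_neg]
  push_cast
  rw [cpow_add _ _ hs, cpow_add _ _ hs, cpow_mul_nat, cpow_ofNat, mul_inv, mul_inv, inv_pow]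
  ring

lemma summable_quadratic_mul_geometric {r : ℝ} (hr : |r| < 1) (α : ℝ) :
    Summable fun k : ℕ => (α * k + α) * (α * k + α + 1) * r ^ k := by
  have hpow (n : ℕ) : Summable fun k : ℕ => (k : ℝ) ^ n * r ^ k :=
    summable_pow_mul_geometric_of_norm_lt_one n hr
  refine ((((hpow 2).mul_left (α ^ 2)).add ((hpow 1).mul_left (2 * α ^ 2 + α))).add
    ((hpow 0).mul_left (α ^ 2 + α))).congr fun k => ?_
  ring

variable {𝔸 : Type*} [NormedRing 𝔸] [NormedAlgebra ℂ 𝔸] [CompleteSpace 𝔸]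

lemma hasSum_smul_resolvent_pow (a : 𝔸) {w : ℂ} (hw : ‖a‖ < ‖w‖) (n : ℕ) :
    HasSum (fun k : ℕ => ((k + n).choose n * w⁻¹ ^ k : ℂ) • a ^ k)
      (w ^ (n + 1) • resolvent a w ^ (n + 1)) := by
  have hw₀ : w ≠ 0 := norm_pos_iff.1 ((norm_nonneg a).trans_lt hw)
  have hsmall : ‖w⁻¹ • a‖ < 1 := by
    rwa [norm_smul, norm_inv, inv_mul_lt_one₀ (norm_pos_iff.2 hw₀)]
  have hres : w • resolvent a w = Ring.inverse (1 - w⁻¹ • a) := by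
    simpa [resolvent, Units.smul_def] using
      spectrum.units_smul_resolvent_self (r := Units.mk0 w hw₀) (a := a)
  rw [← smul_pow, hres]
  refine (hasSum_choose_mul_geometric_of_norm_lt_one' n hsmall).congr_fun fun k => ?_
  rw [smul_pow, mul_smul, Nat.cast_smul_eq_nsmul, nsmul_eq_mul]

lemma hasSum_mittagLefflerTransform (α : ℝ) (a : 𝔸) {s : ℂ} (hs : s ≠ 0) (ha : ‖a‖ < ‖s‖ ^ α) :
    HasSum (mittagLefflerTransformTerm α a · s) (mittagLefflerTransform α a s) := by
  simp only [mittagLefflerTransformTerm, cpow_neg_mul_add_add_two α hs]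
  rw [← norm_cpow_real] at ha
  have hw₀ : s ^ (α : ℂ) ≠ 0 := norm_pos_iff.1 ((norm_nonneg a).trans_lt ha)
  have hcube := (hasSum_smul_resolvent_pow a ha 2).const_smul (2 * (α : ℂ) ^ 2)
  have hsquare := (hasSum_smul_resolvent_pow a ha 1).const_smul ((α : ℂ) * (1 - α))
  convert (hcube.add hsquare).const_smul ((s ^ 2)⁻¹ * (s ^ (α : ℂ))⁻¹) using 1
  · ext k
    simp only [smul_smul, ← add_smul, Nat.cast_choose_two, Nat.choose_one_right]
    congr 1
    push_cast
    ring
  · simp only [mittagLefflerTransform, smul_smul, smul_add]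
    congr 2 <;> field_simp

end TransformSeries

section TransformInversion

lemma rpow_div_Gamma_add_two {q t : ℝ} (hq : 0 < q) :
    q * (q + 1) * (t ^ (q + 2 - 1) / Real.Gamma (q + 2)) = t ^ (q + 1) * (Real.Gamma q)⁻¹ := by
  have hΓ : Real.Gamma (q + 2) = (q + 1) * (q * Real.Gamma q) := by
    rw [← Real.Gamma_add_one hq.ne', ← Real.Gamma_add_one (by positivity), add_assoc,
      one_add_one_eq_two]
  have hΓ₀ := (Real.Gamma_pos_of_pos hq).ne'
  rw [hΓ, show q + 2 - 1 = q + 1 by ring]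
  field_simp

variable {𝔸 : Type*} [NormedRing 𝔸] [NormedAlgebra ℂ 𝔸]

lemma norm_mittagLefflerTransformTerm_le {α : ℝ} (hα : 0 < α) (a : 𝔸) (k : ℕ) {c : ℝ} (hc : 0 < c)
    {s : ℂ} (hs : c ≤ ‖s‖) :
    ‖mittagLefflerTransformTerm α a k s‖ ≤
      ‖(1 : 𝔸)‖ * (c ^ α)⁻¹ * ((α * k + α) * (α * k + α + 1) * (‖a‖ / c ^ α) ^ k) *
        ‖s‖ ^ (-2 : ℝ) := by
  have hq : 0 < α * k + α := by positivity
  calc ‖mittagLefflerTransformTerm α a k s‖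
      = (α * k + α) * (α * k + α + 1) * (‖s‖ ^ (-(α * k + α)) * ‖s‖ ^ (-2 : ℝ)) * ‖a ^ k‖ := by
        rw [mittagLefflerTransformTerm, norm_smul, norm_mul, norm_real,
          Real.norm_of_nonneg (by positivity), norm_cpow_neg_ofReal, neg_add,
          Real.rpow_add (hc.trans_le hs)]
    _ ≤ (α * k + α) * (α * k + α + 1) * (c ^ (-(α * k + α)) * ‖s‖ ^ (-2 : ℝ)) *
          (‖(1 : 𝔸)‖ * ‖a‖ ^ k) := by
        gcongr ?_ * (?_ * ?_) * ?_
        · exact Real.rpow_le_rpow_of_nonpos hc hs (by linarith)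
        · exact norm_pow_le_norm_one_mul a k
    _ = _ := by
        rw [Real.rpow_neg hc.le, Real.rpow_add hc, Real.rpow_mul_natCast hc.le, div_pow]
        field_simp

variable [CompleteSpace 𝔸]

lemma inverseLaplace_mittagLefflerTransformTerm {α : ℝ} (hα : 0 < α) (a : 𝔸) (k : ℕ) {c t : ℝ}
    (hc : 0 < c) (ht : 0 < t) :
    inverseLaplace (mittagLefflerTransformTerm α a k) c t =
      t ^ (α + 1) • (Real.Gamma (α * k + α))⁻¹ • (t ^ α • a) ^ k := by
  have hq : 0 < α * k + α := by positivity
  have htpow : t ^ (α * k + α + 1) = t ^ (α + 1) * (t ^ α) ^ k := by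
    rw [← Real.rpow_mul_natCast ht.le, ← Real.rpow_add ht]
    ring_nf
  unfold mittagLefflerTransformTerm
  rw [inverseLaplace_smul_const, inverseLaplace_const_mul,
    inverseLaplace_cpow_neg (by linarith) hc ht, ← ofReal_mul, rpow_div_Gamma_add_two hq, htpow,
    coe_smul, smul_pow, smul_smul, smul_smul, mul_right_comm, mul_assoc]

lemma inverseLaplace_mittagLefflerTransform {α : ℝ} (hα : 0 < α) {a : 𝔸} {c t : ℝ} (hc : 0 < c)
    (ha : ‖a‖ < c ^ α) (ht : 0 < t) :
    inverseLaplace (mittagLefflerTransform α a) c t =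
      t ^ (α + 1) • mittagLeffler α α (t ^ α • a) := by
  have hnorm {s : ℂ} (hs : s.re = c) : c ≤ ‖s‖ := hs ▸ re_le_norm s
  have hratio : |‖a‖ / c ^ α| < 1 := by
    rwa [abs_of_nonneg (by positivity), div_lt_one (by positivity)]
  have hsum := hasSum_inverseLaplace (F := mittagLefflerTransformTerm α a) hc one_lt_two
    (fun k => ((continuousOn_cpow_const_re_pos _).const_mul _).smul continuousOn_const)
    ((summable_quadratic_mul_geometric hratio α).mul_left _)
    (fun k s hs => norm_mittagLefflerTransformTerm_le hα a k hc (hnorm hs))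
    (fun s hs => hasSum_mittagLefflerTransform α a (norm_pos_iff.1 (hc.trans_le (hnorm hs)))
      (ha.trans_le (Real.rpow_le_rpow hc.le (hnorm hs) hα.le))) t
  simp only [inverseLaplace_mittagLefflerTransformTerm hα a _ hc ht] at hsum
  rw [← hsum.tsum_eq, mittagLeffler, tsum_const_smul'']

end TransformInversion

section TransformBounds

variable {𝔸 : Type*} [NormedRing 𝔸] [NormedAlgebra ℂ 𝔸] {α : ℝ} {a : 𝔸}

lemma differentiableOn_mittagLefflerTransform [CompleteSpace 𝔸]
    (ha : ∀ s : ℂ, 0 < s.re → s ^ (α : ℂ) ∈ resolventSet ℂ a) :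
    DifferentiableOn ℂ (mittagLefflerTransform α a) {s | 0 < s.re} := by
  intro s (hs : 0 < s.re)
  have hs₀ : s ^ 2 ≠ 0 := pow_ne_zero 2 fun h => by simp [h] at hs
  have hpow : DifferentiableAt ℂ (fun s : ℂ => s ^ (α : ℂ)) s :=
    differentiableAt_id.cpow_const (.inl hs)
  have hres : DifferentiableAt ℂ (fun s : ℂ => resolvent a (s ^ (α : ℂ))) s :=
    .fun_comp' s (spectrum.hasDerivAt_resolvent_const_left (ha s hs)).differentiableAt hpow
  have hinv : DifferentiableAt ℂ (fun s : ℂ => (s ^ 2)⁻¹) s :=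
    (differentiableAt_id.pow 2).inv hs₀
  unfold mittagLefflerTransform
  exact (hinv.fun_smul ((((hpow.fun_pow 2).fun_smul (hres.fun_pow 3)).fun_const_smul _).fun_add
    ((hpow.fun_smul (hres.fun_pow 2)).fun_const_smul _))).differentiableWithinAt

lemma norm_mittagLefflerTransform_le {s : ℂ} {D : ℝ}
    (hD : ‖s ^ (α : ℂ)‖ * ‖resolvent a (s ^ (α : ℂ))‖ ≤ D) :
    ‖mittagLefflerTransform α a s‖ ≤ (2 * α ^ 2 * D + |α * (1 - α)|) *
      (‖s ^ (α : ℂ)‖ * ‖resolvent a (s ^ (α : ℂ))‖ ^ 2) * ‖s‖ ^ (-2 : ℝ) := by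
  have hsq : ‖(s ^ 2)⁻¹‖ = ‖s‖ ^ (-2 : ℝ) := by
    rw [norm_inv, norm_pow, Real.rpow_neg (norm_nonneg _), Real.rpow_two]
  have hcoef₁ : ‖2 * (α : ℂ) ^ 2‖ = 2 * α ^ 2 := by simp
  have hcoef₂ : ‖(α : ℂ) * (1 - α)‖ = |α * (1 - α)| := by
    rw [← ofReal_one, ← ofReal_sub, ← ofReal_mul, norm_real, Real.norm_eq_abs]
  rw [mittagLefflerTransform, norm_smul, hsq, mul_comm]
  gcongr
  set w := s ^ (α : ℂ)
  set R := resolvent a w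
  calc _ ≤ 2 * α ^ 2 * (‖w‖ ^ 2 * ‖R‖ ^ 3) + |α * (1 - α)| * (‖w‖ * ‖R‖ ^ 2) := by
        refine (norm_add_le _ _).trans ?_
        rw [norm_smul, norm_smul, norm_smul, norm_smul, norm_pow w, hcoef₁, hcoef₂]
        gcongr
        · exact norm_pow_le' R (by norm_num)
        · exact norm_pow_le' R (by norm_num)
    _ = (2 * α ^ 2 * (‖w‖ * ‖R‖) + |α * (1 - α)|) * (‖w‖ * ‖R‖ ^ 2) := by ring
    _ ≤ (2 * α ^ 2 * D + |α * (1 - α)|) * (‖w‖ * ‖R‖ ^ 2) := by gcongr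

lemma norm_mittagLefflerTransform_le_of_norm_resolvent_le {s : ℂ} (hs : s ≠ 0) {C D : ℝ}
    (hC : ‖resolvent a (s ^ (α : ℂ))‖ ≤ C)
    (hD : ‖s ^ (α : ℂ)‖ * ‖resolvent a (s ^ (α : ℂ))‖ ≤ D) :
    ‖mittagLefflerTransform α a s‖ ≤
      (2 * α ^ 2 * D + |α * (1 - α)|) * C ^ 2 * ‖s‖ ^ (-(2 - α)) := by
  have hs₀ : 0 < ‖s‖ := norm_pos_iff.2 hs
  have hD₀ : 0 ≤ D := le_trans (by positivity) hD
  have hsplit : ‖s‖ ^ (-(2 - α)) = ‖s ^ (α : ℂ)‖ * ‖s‖ ^ (-2 : ℝ) := by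
    rw [norm_cpow_real, ← Real.rpow_add hs₀, neg_sub, sub_eq_add_neg]
  calc ‖mittagLefflerTransform α a s‖
      ≤ (2 * α ^ 2 * D + |α * (1 - α)|) *
          (‖s ^ (α : ℂ)‖ * ‖resolvent a (s ^ (α : ℂ))‖ ^ 2) * ‖s‖ ^ (-2 : ℝ) :=
        norm_mittagLefflerTransform_le hD
    _ ≤ (2 * α ^ 2 * D + |α * (1 - α)|) * (‖s ^ (α : ℂ)‖ * C ^ 2) * ‖s‖ ^ (-2 : ℝ) := by gcongr
    _ = _ := by rw [hsplit]; ring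

lemma norm_mittagLefflerTransform_le_of_norm_mul_norm_resolvent_le {s : ℂ} (hs : s ≠ 0) {D : ℝ}
    (hD : ‖s ^ (α : ℂ)‖ * ‖resolvent a (s ^ (α : ℂ))‖ ≤ D) :
    ‖mittagLefflerTransform α a s‖ ≤
      (2 * α ^ 2 * D + |α * (1 - α)|) * D ^ 2 * ‖s‖ ^ (-(2 + α)) := by
  have hs₀ : 0 < ‖s‖ := norm_pos_iff.2 hs
  have hD₀ : 0 ≤ D := le_trans (by positivity) hD
  have hsplit : ‖s‖ ^ (-(2 + α)) = ‖s ^ (α : ℂ)‖⁻¹ * ‖s‖ ^ (-2 : ℝ) := by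
    rw [norm_cpow_real, ← Real.rpow_neg hs₀.le, ← Real.rpow_add hs₀, neg_add_rev]
  have hw : 0 < ‖s ^ (α : ℂ)‖ := by
    rw [norm_cpow_real]
    positivity
  have hpow : ‖s ^ (α : ℂ)‖ * ‖resolvent a (s ^ (α : ℂ))‖ ^ 2 ≤ ‖s ^ (α : ℂ)‖⁻¹ * D ^ 2 := by
    rw [le_inv_mul_iff₀ hw, ← mul_assoc, ← sq, ← mul_pow]
    gcongr
  calc ‖mittagLefflerTransform α a s‖
      ≤ (2 * α ^ 2 * D + |α * (1 - α)|) *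
          (‖s ^ (α : ℂ)‖ * ‖resolvent a (s ^ (α : ℂ))‖ ^ 2) * ‖s‖ ^ (-2 : ℝ) :=
        norm_mittagLefflerTransform_le hD
    _ ≤ (2 * α ^ 2 * D + |α * (1 - α)|) * (‖s ^ (α : ℂ)‖⁻¹ * D ^ 2) * ‖s‖ ^ (-2 : ℝ) := by gcongr
    _ = _ := by rw [hsplit]; ring

end TransformBounds

section MittagLefflerBound

variable {𝔸 : Type*} [NormedRing 𝔸] [NormedAlgebra ℂ 𝔸] [CompleteSpace 𝔸] {α : ℝ} {a : 𝔸}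

lemma exists_norm_mittagLeffler_le_of_norm_transform_le (hα : 0 < α)
    (ha : ∀ s : ℂ, 0 < s.re → s ^ (α : ℂ) ∈ resolventSet ℂ a) {r M : ℝ} (hr : 1 < r)
    (hM : ∀ s : ℂ, 0 < s.re → ‖mittagLefflerTransform α a s‖ ≤ M * ‖s‖ ^ (-r)) :
    ∃ K, ∀ t : ℝ, 0 < t → ‖mittagLeffler α α (t ^ α • a)‖ ≤ K * t ^ (r - 2 - α) := by
  obtain ⟨c, hac, hc⟩ := (((tendsto_rpow_atTop hα).eventually_gt_atTop ‖a‖).and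
    (eventually_gt_atTop 0)).exists
  refine ⟨(2 * Real.pi)⁻¹ * (Real.exp 1 * M * ∫ w : ℝ, (1 + w ^ 2) ^ (-r / 2)), fun t ht => ?_⟩
  have hbound := norm_inverseLaplace_le hr (differentiableOn_mittagLefflerTransform ha) hM hc ht
  rw [inverseLaplace_mittagLefflerTransform hα hc hac ht, norm_smul,
    Real.norm_of_nonneg (by positivity), mul_comm, ← le_div_iff₀ (by positivity), mul_div_assoc,
    ← Real.rpow_sub ht] at hbound
  rwa [sub_sub, show 2 + α = 1 + (α + 1) by ring, ← sub_sub]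

theorem exists_norm_mittagLeffler_le (hα₀ : 0 < α) (hα₁ : α < 1)
    (ha : ∀ μ ∈ spectrum ℂ a, α * Real.pi / 2 < |arg μ|) :
    ∃ K, ∀ t : ℝ, 0 < t → ‖mittagLeffler α α (t ^ α • a)‖ ≤ K * min 1 (t ^ (-(2 * α))) := by
  let S : Set ℂ := {z | |arg z| ≤ α * Real.pi / 2}
  have hS : IsClosed S := isClosed_abs_arg_le (by positivity) (by nlinarith [Real.pi_pos])
  have hSa : S ⊆ resolventSet ℂ a := fun z hz => by_contra fun hspec => (ha z hspec).not_ge hz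
  have hpow (s : ℂ) (hs : 0 < s.re) : s ^ (α : ℂ) ∈ S :=
    abs_arg_cpow_ofReal_le_of_re_nonneg hα₀.le (by linarith) hs.le
  have hne {s : ℂ} (hs : 0 < s.re) : s ≠ 0 := norm_pos_iff.1 (hs.trans_le (re_le_norm s))
  obtain ⟨C, hC⟩ := exists_norm_resolvent_le_of_isClosed hS hSa
  obtain ⟨D, hD⟩ := exists_norm_mul_norm_resolvent_le_of_isClosed hS hSa
  obtain ⟨K₁, hK₁⟩ := exists_norm_mittagLeffler_le_of_norm_transform_le hα₀
    (fun s hs => hSa (hpow s hs)) (r := 2 - α) (by linarith) fun s hs =>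
      norm_mittagLefflerTransform_le_of_norm_resolvent_le (hne hs) (hC _ (hpow s hs))
        (hD _ (hpow s hs))
  obtain ⟨K₂, hK₂⟩ := exists_norm_mittagLeffler_le_of_norm_transform_le hα₀
    (fun s hs => hSa (hpow s hs)) (r := 2 + α) (by linarith) fun s hs =>
      norm_mittagLefflerTransform_le_of_norm_mul_norm_resolvent_le (hne hs) (hD _ (hpow s hs))
  refine ⟨max K₁ K₂, fun t ht => ?_⟩
  rcases min_choice 1 (t ^ (-(2 * α))) with hmin | hmin <;> rw [hmin]
  · refine (hK₂ t ht).trans ?_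
    rw [show 2 + α - 2 - α = 0 by ring, Real.rpow_zero]
    gcongr
    exact le_max_right _ _
  · refine (hK₁ t ht).trans ?_
    rw [show 2 - α - 2 - α = -(2 * α) by ring]
    gcongr
    exact le_max_left _ _

end MittagLefflerBound

section Convolution

variable {p q r u : ℝ}

lemma min_rpow_le_rpow (hu : 0 < u) (hqr : q ≤ r) (hrp : r ≤ p) :
    min (u ^ p) (u ^ q) ≤ u ^ r := by
  rcases le_total u 1 with h | h
  · exact (min_le_left _ _).trans (Real.rpow_le_rpow_of_exponent_ge hu h hrp)
  · exact (min_le_right _ _).trans (Real.rpow_le_rpow_of_exponent_le h hqr)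

lemma integrableOn_min_rpow (hp : -1 < p) (hq : q < -1) :
    IntegrableOn (fun u : ℝ => min (u ^ p) (u ^ q)) (Set.Ioi 0) := by
  have hnonneg {u : ℝ} (hu : 0 < u) : 0 ≤ min (u ^ p) (u ^ q) := by positivity
  have hmeas : Measurable fun u : ℝ => min (u ^ p) (u ^ q) := by fun_prop
  rw [← Set.Ioc_union_Ioi_eq_Ioi (zero_le_one (α := ℝ))]
  refine IntegrableOn.union ?_ ?_
  · have hint : IntegrableOn (fun u : ℝ => u ^ p) (Set.Ioc 0 1) :=
      (intervalIntegrable_iff_integrableOn_Ioc_of_le zero_le_one).1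
        (intervalIntegral.intervalIntegrable_rpow' hp)
    refine hint.mono' hmeas.aestronglyMeasurable ?_
    filter_upwards [ae_restrict_mem measurableSet_Ioc] with u hu
    exact (Real.norm_of_nonneg (hnonneg hu.1)).trans_le (min_le_left _ _)
  · refine (integrableOn_Ioi_rpow_of_lt hq one_pos).mono' hmeas.aestronglyMeasurable ?_
    filter_upwards [ae_restrict_mem measurableSet_Ioi] with u hu
    exact (Real.norm_of_nonneg (hnonneg (one_pos.trans hu))).trans_le (min_le_right _ _)

variable {α C t : ℝ} {k m : ℝ → ℝ}

-- Where `τ ≥ t / 2` the factor `τ ^ (α - 1)` is at most `(t / 2) ^ (α - 1)`; elsewhere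
-- `t - τ ≥ t / 2`, so that the kernel is at most `C * (2 / t)`.
lemma abs_kernel_mul_rpow_le (hα : α ≤ 1) (hkm : ∀ u, 0 < u → |k u| ≤ m u)
    (hm : ∀ u, 0 < u → m u ≤ C * u⁻¹) {τ : ℝ} (hτ : 0 < τ) (hτt : τ < t) :
    |k (t - τ) * τ ^ (α - 1)| ≤
      (t / 2) ^ (α - 1) * m (t - τ) + C * (2 / t) * τ ^ (α - 1) := by
  have ht : 0 < t := hτ.trans hτt
  have hu : 0 < t - τ := sub_pos.2 hτt
  have hm₀ : 0 ≤ m (t - τ) := (abs_nonneg _).trans (hkm _ hu)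
  have hC : 0 ≤ C := nonneg_of_mul_nonneg_left (hm₀.trans (hm _ hu)) (inv_pos.2 hu)
  rw [abs_mul, abs_of_pos (Real.rpow_pos_of_pos hτ _)]
  rcases le_total (t / 2) τ with hhalf | hhalf
  · have hpow : τ ^ (α - 1) ≤ (t / 2) ^ (α - 1) :=
      Real.rpow_le_rpow_of_nonpos (by positivity) hhalf (by linarith)
    calc |k (t - τ)| * τ ^ (α - 1) ≤ m (t - τ) * (t / 2) ^ (α - 1) := by
          gcongr
          exact hkm _ hu
      _ ≤ _ := by
          rw [mul_comm]
          exact le_add_of_nonneg_right (by positivity)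
  · have hinv : (t - τ)⁻¹ ≤ 2 / t := by
      rw [← inv_div]
      exact inv_anti₀ (by positivity) (by linarith)
    calc |k (t - τ)| * τ ^ (α - 1) ≤ C * (2 / t) * τ ^ (α - 1) := by
          gcongr
          exact (hkm _ hu).trans ((hm _ hu).trans (by gcongr))
      _ ≤ _ := le_add_of_nonneg_left (by positivity)

lemma integral_kernel_mul_rpow_le (hα₀ : 0 < α) (hα₁ : α ≤ 1)
    (hm_int : IntegrableOn m (Set.Ioi 0)) (hkm : ∀ u, 0 < u → |k u| ≤ m u)
    (hm : ∀ u, 0 < u → m u ≤ C * u⁻¹) (ht : 0 < t) :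
    ∫ τ in 0..t, k (t - τ) * τ ^ (α - 1) ≤
      (t / 2) ^ (α - 1) * (∫ u in Set.Ioi 0, m u) + C * (2 / t) * (t ^ α / α) := by
  have hm_refl : IntervalIntegrable (fun τ => m (t - τ)) volume 0 t := by
    have hm_ivl : IntervalIntegrable m volume 0 t :=
      (intervalIntegrable_iff_integrableOn_Ioc_of_le ht.le).2
        (hm_int.mono_set Set.Ioc_subset_Ioi_self)
    simpa using (hm_ivl.comp_sub_left t).symm
  have hpow : IntervalIntegrable (fun τ : ℝ => τ ^ (α - 1)) volume 0 t :=
    intervalIntegral.intervalIntegrable_rpow' (by linarith)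
  have hm_le : ∫ τ in 0..t, m (t - τ) ≤ ∫ u in Set.Ioi 0, m u := by
    rw [intervalIntegral.integral_comp_sub_left m, sub_self, sub_zero,
      intervalIntegral.integral_of_le ht.le]
    refine setIntegral_mono_set hm_int ?_ Set.Ioc_subset_Ioi_self.eventuallyLE
    filter_upwards [ae_restrict_mem measurableSet_Ioi] with u hu
    exact (abs_nonneg _).trans (hkm u hu)
  have hdom : ∀ᵐ τ : ℝ, τ ∈ Set.Ioc 0 t → ‖k (t - τ) * τ ^ (α - 1)‖ ≤
      (t / 2) ^ (α - 1) * m (t - τ) + C * (2 / t) * τ ^ (α - 1) := by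
    filter_upwards [Measure.ae_ne volume t] with τ hne hτ
    exact abs_kernel_mul_rpow_le hα₁ hkm hm hτ.1 (hτ.2.lt_of_ne hne)
  calc ∫ τ in 0..t, k (t - τ) * τ ^ (α - 1)
      ≤ ∫ τ in 0..t, ((t / 2) ^ (α - 1) * m (t - τ) + C * (2 / t) * τ ^ (α - 1)) :=
        (Real.le_norm_self _).trans (intervalIntegral.norm_integral_le_of_norm_le ht.le hdom
          ((hm_refl.const_mul _).add (hpow.const_mul _)))
    _ = (t / 2) ^ (α - 1) * (∫ τ in 0..t, m (t - τ)) + C * (2 / t) * (t ^ α / α) := by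
        rw [intervalIntegral.integral_add (hm_refl.const_mul _) (hpow.const_mul _),
          intervalIntegral.integral_const_mul, intervalIntegral.integral_const_mul,
          integral_rpow (.inl (by linarith)), sub_add_cancel, Real.zero_rpow hα₀.ne', sub_zero]
    _ ≤ _ := by gcongr

lemma rpow_mul_integral_kernel_mul_rpow_le (hα₀ : 0 < α) (hα₁ : α ≤ 1)
    (hm_int : IntegrableOn m (Set.Ioi 0)) (hkm : ∀ u, 0 < u → |k u| ≤ m u)
    (hm : ∀ u, 0 < u → m u ≤ C * u⁻¹) (ht : 0 < t) :
    t ^ (1 - α) * ∫ τ in 0..t, k (t - τ) * τ ^ (α - 1) ≤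
      2 ^ (1 - α) * (∫ u in Set.Ioi 0, m u) + C * (2 / α) := by
  have hhalf : t ^ (1 - α) * (t / 2) ^ (α - 1) = 2 ^ (1 - α) := by
    rw [← neg_sub 1 α, Real.rpow_neg (by positivity), Real.div_rpow ht.le two_pos.le, inv_div,
      mul_div_cancel₀ _ (by positivity)]
  have hfull : t ^ (1 - α) * t ^ α = t := by rw [← Real.rpow_add ht, sub_add_cancel, Real.rpow_one]
  calc _ ≤ t ^ (1 - α) * ((t / 2) ^ (α - 1) * (∫ u in Set.Ioi 0, m u) +
            C * (2 / t) * (t ^ α / α)) := by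
        gcongr
        exact integral_kernel_mul_rpow_le hα₀ hα₁ hm_int hkm hm ht
    _ = (t ^ (1 - α) * (t / 2) ^ (α - 1)) * (∫ u in Set.Ioi 0, m u) +
          C * (2 / t) * ((t ^ (1 - α) * t ^ α) / α) := by ring
    _ = _ := by
        rw [hhalf, hfull]
        field_simp

end Convolution

theorem stmt2_general {𝔸 : Type*} [NormedRing 𝔸] [NormedAlgebra ℂ 𝔸] [CompleteSpace 𝔸] {α : ℝ}
    (hα₀ : 0 < α) (hα₁ : α < 1) {a : 𝔸} (ha : ∀ μ ∈ spectrum ℂ a, α * Real.pi / 2 < |arg μ|) :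
    ∃ C : ℝ, ∀ t : ℝ, 0 ≤ t →
      t ^ (1 - α) * ∫ τ in 0..t,
        (t - τ) ^ (α - 1) * ‖mittagLeffler α α ((t - τ) ^ α • a)‖ * τ ^ (α - 1) ≤ C := by
  obtain ⟨K, hK⟩ := exists_norm_mittagLeffler_le hα₀ hα₁ ha
  have hK₀ : 0 ≤ K := by simpa using (norm_nonneg _).trans (hK 1 one_pos)
  let k (u : ℝ) : ℝ := u ^ (α - 1) * ‖mittagLeffler α α (u ^ α • a)‖
  let m (u : ℝ) : ℝ := K * min (u ^ (α - 1)) (u ^ (-α - 1))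
  have hm_int : IntegrableOn m (Set.Ioi 0) :=
    (integrableOn_min_rpow (by linarith) (by linarith)).const_mul K
  have hkm (u : ℝ) (hu : 0 < u) : |k u| ≤ m u := by
    have hexp : u ^ (-α - 1) = u ^ (α - 1) * u ^ (-(2 * α)) := by
      rw [← Real.rpow_add hu]
      ring_nf
    calc |k u| = u ^ (α - 1) * ‖mittagLeffler α α (u ^ α • a)‖ := abs_of_nonneg (by positivity)
      _ ≤ u ^ (α - 1) * (K * min 1 (u ^ (-(2 * α)))) := by gcongr; exact hK u hu
      _ = m u := by
        simp only [m]
        rw [hexp, mul_left_comm, mul_min_of_nonneg _ _ (by positivity), mul_one]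
  have hm (u : ℝ) (hu : 0 < u) : m u ≤ K * u⁻¹ := by
    rw [← Real.rpow_neg_one]
    exact mul_le_mul_of_nonneg_left (min_rpow_le_rpow hu (by linarith) (by linarith)) hK₀
  refine ⟨max (2 ^ (1 - α) * (∫ u in Set.Ioi 0, m u) + K * (2 / α)) 0, fun t ht => ?_⟩
  rcases ht.eq_or_lt with rfl | ht
  · simp
  · exact (rpow_mul_integral_kernel_mul_rpow_le hα₀ hα₁.le hm_int hkm hm ht).trans
      (le_max_left _ _)

section Complexification

lemma map_mittagLeffler {𝔸 𝔹 : Type*} [Ring 𝔸] [Algebra ℝ 𝔸] [TopologicalSpace 𝔸]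
    [ContinuousSMul ℝ 𝔸] [Ring 𝔹] [Algebra ℝ 𝔹] [TopologicalSpace 𝔹] [ContinuousSMul ℝ 𝔹]
    [T2Space 𝔹] (f : 𝔸 →+* 𝔹) (hf : Continuous f) {g : 𝔹 → 𝔸} (hg : Continuous g)
    (hgf : Function.LeftInverse g f) (α β : ℝ) (a : 𝔸) :
    f (mittagLeffler α β a) = mittagLeffler α β (f a) := by
  simp only [mittagLeffler, hgf.map_tsum _ hf hg, map_real_smul f hf, map_pow]

lemma norm_mittagLeffler_smul_map {𝔸 𝔹 : Type*} [NormedRing 𝔸] [NormedAlgebra ℝ 𝔸]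
    [NormedRing 𝔹] [NormedAlgebra ℂ 𝔹] (f : 𝔸 →+* 𝔹) (hf : ∀ x, ‖f x‖ = ‖x‖) {g : 𝔹 → 𝔸}
    (hg : Continuous g) (hgf : Function.LeftInverse g f) (α β u : ℝ) (a : 𝔸) :
    ‖mittagLeffler α β (u • f a)‖ = ‖mittagLeffler α β (u • a)‖ := by
  have hcont : Continuous f := (AddMonoidHomClass.isometry_of_norm f hf).continuous
  rw [← map_real_smul f hcont, ← map_mittagLeffler f hcont hg hgf, hf]

lemma linftyOpNorm_map_ofReal {m n : Type*} [Fintype m] [Fintype n] (X : Matrix m n ℝ) :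
    ‖X.map (algebraMap ℝ ℂ)‖ = ‖X‖ := by
  simp [Matrix.linfty_opNorm_def]

end Complexification

end

theorem stmt2 (α : ℝ) (hα0 : 0 < α) (hα1 : α < 1) (s : ℕ)
    (A : Matrix (Fin s) (Fin s) ℝ)
    (hspec : ∀ μ ∈ spectrum ℂ (A.map (algebraMap ℝ ℂ)),
      μ ≠ 0 ∧ α * Real.pi / 2 < |Complex.arg μ|) :
    ∃ C : ℝ, ∀ t : ℝ, 0 ≤ t →
      t ^ (1 - α) * ∫ τ in (0:ℝ)..t,
        (t - τ) ^ (α - 1) * ‖ML α α ((t - τ) ^ α • A)‖ * τ ^ (α - 1) ≤ C := by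
  let _ : NormedAlgebra ℝ (Matrix (Fin s) (Fin s) ℝ) := Matrix.linftyOpNormedAlgebra
  let _ : NormedAlgebra ℂ (Matrix (Fin s) (Fin s) ℂ) := Matrix.linftyOpNormedAlgebra
  have _ : CompleteSpace (Matrix (Fin s) (Fin s) ℂ) := FiniteDimensional.complete ℂ _
  obtain ⟨C, hC⟩ := stmt2_general (a := (algebraMap ℝ ℂ).mapMatrix A) hα0 hα1
    fun μ hμ => (hspec μ hμ).2
  have hnorm := norm_mittagLeffler_smul_map ((algebraMap ℝ ℂ).mapMatrix (m := Fin s))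
    linftyOpNorm_map_ofReal (g := fun X => X.map Complex.re)
    (continuous_id.matrix_map Complex.continuous_re) (fun X => by ext; simp) α α
  simp only [hnorm] at hC
  exact ⟨C, hC⟩
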